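/- Lemma B1.6: There exist constants c > 0 and t₀ > 0 such that for all real t ≥ t₀, with R = R_max(t), |C(1,R) + D(1,R) − √(2π)·(1 − 8π/t)^{−1/4}·t^{−1/2}·exp(−i·(t − (t/2)·log(t/(2π)) + π + 2π²/t) − iπ/4)| ≤ c·t^{−2/3}. -/

import Mathlib

open MeasureTheory

/-- `a(t) = √(8t/π)` -/
noncomputable def a (t : ℝ) : ℝ := Real.sqrt (8 * t / Real.pi)

/-- `pc(α,t) = 2(α/a(t))²·(1 + √(1 − (a(t)/α)²)) − 1` -/
noncomputable def pc (α t : ℝ) : ℝ :=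
  2 * (α / a t) ^ 2 * (1 + Real.sqrt (1 - (a t / α) ^ 2)) - 1

/-- The integrand of `C(N,R)`, with `pc_+(u) = pc(t(1 + 1/u)/π, t)`. -/
noncomputable def Cfun (N : ℕ) (t : ℝ) (u : ℝ) : ℂ :=
  Complex.exp (-Complex.I * ((t * (N : ℝ) * (1 + 1 / u) : ℝ) : ℂ) +
      Complex.I * ((t / 2 : ℝ) : ℂ) *
        ((Real.log (pc (t * (1 + 1 / u) / Real.pi) t) +
            1 / pc (t * (1 + 1 / u) / Real.pi) t : ℝ) : ℂ)) /
    (((u ^ 2 * ((1 + 1 / u) ^ 2 - 8 * Real.pi / t) ^ ((1 : ℝ) / 4) : ℝ)) : ℂ)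

/-- `C(N,R)` -/
noncomputable def Cint (N : ℕ) (R t : ℝ) : ℂ :=
  ∫ u in Set.Ioi (t / (Real.pi * R)), Cfun N t u

/-- The integrand of `D(N,R)`, with `pc_−(u) = pc(t(1 − 1/u)/π, t)`. -/
noncomputable def Dfun (N : ℕ) (t : ℝ) (u : ℝ) : ℂ :=
  Complex.exp (-Complex.I * ((t * (N : ℝ) * (1 - 1 / u) : ℝ) : ℂ) +
      Complex.I * ((t / 2 : ℝ) : ℂ) *
        ((Real.log (pc (t * (1 - 1 / u) / Real.pi) t) +
            1 / pc (t * (1 - 1 / u) / Real.pi) t : ℝ) : ℂ)) /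
    (((u ^ 2 * ((1 - 1 / u) ^ 2 - 8 * Real.pi / t) ^ ((1 : ℝ) / 4) : ℝ)) : ℂ)

/-- `D(N,R)` -/
noncomputable def Dint (N : ℕ) (R t : ℝ) : ℂ :=
  ∫ u in Set.Ioi (t / (Real.pi * R)), Dfun N t u

/-- `η = (1/2)(1250/π³)^{1/6}` -/
noncomputable def eta : ℝ := (1 / 2) * (1250 / Real.pi ^ 3) ^ ((1 : ℝ) / 6)

/-- `pc_− = 1 + η√(8π)·t^{−1/3}` -/
noncomputable def pcm (t : ℝ) : ℝ := 1 + eta * Real.sqrt (8 * Real.pi) * t ^ (-(1 : ℝ) / 3)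

/-- `R_max = t/π − a(t)(pc_− + 1)/(2√pc_−)` -/
noncomputable def Rmax (t : ℝ) : ℝ :=
  t / Real.pi - a t * (pcm t + 1) / (2 * Real.sqrt (pcm t))


lemma gauss_tail (b : ℂ) (hb : b ≠ 0) (hre : 0 ≤ b.re) (B X : ℝ) (hB : 0 < B) (hX : B ≤ X) :
    ‖∫ s in B..X, Complex.exp (-b * (s:ℂ) ^ 2)‖ ≤ 1 / (‖b‖ * B) := by
  have hbn : 0 < ‖b‖ := norm_pos_iff.mpr hb
  have hX0 : 0 < X := lt_of_lt_of_le hB hX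
  have hpos : ∀ s ∈ Set.uIcc B X, 0 < s := by
    intro s hs
    rw [Set.uIcc_of_le hX] at hs
    exact lt_of_lt_of_le hB hs.1
  have hnorm : ∀ s : ℝ, ‖Complex.exp (-b * (s:ℂ) ^ 2)‖ ≤ 1 := by
    intro s
    rw [Complex.norm_exp]
    apply Real.exp_le_one_iff.mpr
    have : (-b * (s:ℂ) ^ 2).re = -(b.re * s ^ 2) := by
      rw [← Complex.ofReal_pow, Complex.re_mul_ofReal]; simp
    rw [this]
    have := mul_nonneg hre (sq_nonneg s)
    linarith
  have hF : ∀ s ∈ Set.uIcc B X, HasDerivAt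
      (fun s : ℝ => -Complex.exp (-b * (s:ℂ) ^ 2) / (2 * b * s))
      (Complex.exp (-b * (s:ℂ) ^ 2) + Complex.exp (-b * (s:ℂ) ^ 2) / (2 * b * (s:ℂ) ^ 2)) s := by
    intro s hs
    have hs0 : (s:ℂ) ≠ 0 := by exact_mod_cast (hpos s hs).ne'
    have h1 : HasDerivAt (fun s : ℂ => -Complex.exp (-b * s ^ 2) / (2 * b * s))
      (Complex.exp (-b * (s:ℂ) ^ 2) + Complex.exp (-b * (s:ℂ) ^ 2) / (2 * b * (s:ℂ) ^ 2)) (s:ℂ) := by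
      have h2 : HasDerivAt (fun s : ℂ => -b * s ^ 2) (-b * (2 * (s:ℂ))) (s:ℂ) := by
        simpa using ((hasDerivAt_pow 2 (s:ℂ)).const_mul (-b))
      have h3 : HasDerivAt (fun s : ℂ => 2 * b * s) (2 * b) (s:ℂ) := by
        simpa using ((hasDerivAt_id (s:ℂ)).const_mul (2 * b))
      refine ((h2.cexp.neg).div h3 (by simp [hb, hs0])).congr_deriv ?_
      simp only [Pi.neg_apply]
      field_simp
      ring
    exact h1.comp_ofReal
  have hc1 : Continuous (fun s : ℝ => Complex.exp (-b * (s:ℂ) ^ 2)) := by fun_prop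
  have hc2 : ContinuousOn (fun s : ℝ => Complex.exp (-b * (s:ℂ) ^ 2) / (2 * b * (s:ℂ) ^ 2))
      (Set.uIcc B X) := by
    apply ContinuousOn.div hc1.continuousOn (by fun_prop)
    intro s hs
    have hs0 : (s:ℂ) ≠ 0 := by exact_mod_cast (hpos s hs).ne'
    simp [hb, hs0]
  have hi1 := hc1.intervalIntegrable (μ := volume) B X
  have hi2 := hc2.intervalIntegrable (μ := volume)
  have key := intervalIntegral.integral_eq_sub_of_hasDerivAt hF (hi1.add hi2)
  rw [intervalIntegral.integral_add hi1 hi2] at key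
  have hbd : ‖∫ s in B..X, Complex.exp (-b * (s:ℂ) ^ 2) / (2 * b * (s:ℂ) ^ 2)‖
      ≤ ∫ s in B..X, (1 / (2 * ‖b‖)) * (1 / s ^ 2) := by
    apply intervalIntegral.norm_integral_le_of_norm_le hX
    · refine Filter.Eventually.of_forall fun s hs => ?_
      have hs0 : 0 < s := lt_trans hB hs.1
      rw [norm_div, norm_mul, norm_mul, norm_pow, Complex.norm_real, Real.norm_of_nonneg hs0.le]
      rw [Complex.norm_ofNat, one_div_mul_one_div]
      have := hnorm s
      gcongr
    · apply ContinuousOn.intervalIntegrable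
      apply ContinuousOn.mul continuousOn_const
      apply ContinuousOn.div continuousOn_const (by fun_prop)
      intro s hs
      have := hpos s hs
      positivity
  have hval : ∫ s in B..X, (1 / (2 * ‖b‖)) * (1 / s ^ 2) = (1 / (2 * ‖b‖)) * (1 / B - 1 / X) := by
    rw [intervalIntegral.integral_const_mul]
    congr 1
    rw [intervalIntegral.integral_eq_sub_of_hasDerivAt (f := fun s => - (1 / s))]
    · ring
    · intro s hs
      have hs0 := hpos s hs
      have := ((hasDerivAt_inv hs0.ne').fun_neg)
      simpa [one_div] using this
    · apply ContinuousOn.intervalIntegrable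
      apply ContinuousOn.div continuousOn_const (by fun_prop)
      intro s hs
      have := hpos s hs
      positivity
  rw [hval] at hbd
  have hend : ∀ s : ℝ, 0 < s → ‖-Complex.exp (-b * (s:ℂ) ^ 2) / (2 * b * s)‖ ≤ (1 / (2 * ‖b‖)) * (1 / s) := by
    intro s hs
    rw [norm_div, norm_neg, norm_mul, norm_mul, Complex.norm_real, Real.norm_of_nonneg hs.le,
      Complex.norm_ofNat, one_div_mul_one_div_rev, mul_comm s]
    have := hnorm s
    gcongr
  have e1 := hend B hB
  have e2 := hend X hX0
  have : ∫ s in B..X, Complex.exp (-b * (s:ℂ) ^ 2) =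
      -Complex.exp (-b * (X:ℂ) ^ 2) / (2 * b * X) - -Complex.exp (-b * (B:ℂ) ^ 2) / (2 * b * B)
      - ∫ s in B..X, Complex.exp (-b * (s:ℂ) ^ 2) / (2 * b * (s:ℂ) ^ 2) := by
    rw [← key]; ring
  rw [this]
  have hfin : 1 / (‖b‖ * B) = (1 / (2 * ‖b‖)) * (1 / X) + (1 / (2 * ‖b‖)) * (1 / B)
      + (1 / (2 * ‖b‖)) * (1 / B - 1 / X) := by
    field_simp; ring
  rw [hfin]
  refine (norm_sub_le _ _).trans (add_le_add ((norm_sub_le _ _).trans (add_le_add e2 e1)) hbd)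

lemma gauss_trunc (b : ℂ) (hre : 0 < b.re) (A B : ℝ) (hA : 0 < A) (hB : 0 < B) :
    ‖(∫ s in (-A)..B, Complex.exp (-b * (s:ℂ) ^ 2)) - (Real.pi / b) ^ (1 / 2 : ℂ)‖
      ≤ 1 / (‖b‖ * A) + 1 / (‖b‖ * B) := by
  have hb : b ≠ 0 := by rintro rfl; simp at hre
  have hintg := integrable_cexp_neg_mul_sq hre
  have hlim := intervalIntegral_tendsto_integral hintg Filter.tendsto_neg_atTop_atBot Filter.tendsto_id
  rw [integral_gaussian_complex hre] at hlim
  have hlim2 := (tendsto_const_nhds (x := ∫ s in (-A)..B, Complex.exp (-b * (s:ℂ) ^ 2))).sub hlim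
  refine le_of_tendsto hlim2.norm ?_
  filter_upwards [Filter.eventually_ge_atTop (max A B)] with X hX
  have hXA := (le_max_left _ _).trans hX
  have hXB := (le_max_right _ _).trans hX
  have hii : ∀ p q : ℝ, IntervalIntegrable (fun s : ℝ => Complex.exp (-b * (s:ℂ) ^ 2)) volume p q :=
    fun p q => hintg.intervalIntegrable
  have h1 := intervalIntegral.integral_add_adjacent_intervals (hii (-X) (-A)) (hii (-A) B)
  have h2 := intervalIntegral.integral_add_adjacent_intervals (hii (-X) B) (hii B X)
  have h3 : ∫ s in (-X)..(-A), Complex.exp (-b * (s:ℂ) ^ 2) = ∫ s in A..X, Complex.exp (-b * (s:ℂ) ^ 2) := by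
    rw [← intervalIntegral.integral_comp_neg]; simp
  simp only [id]
  rw [← h2, ← h1, h3]
  have e1 := gauss_tail b hb hre.le A X hA hXA
  have e2 := gauss_tail b hb hre.le B X hB hXB
  have : ∀ x y z : ℂ, x - (y + x + z) = -(y + z) := by intros; ring
  rw [this, norm_neg]
  exact (norm_add_le _ _).trans (add_le_add e1 e2)

lemma fresnel (t A B : ℝ) (ht : 0 < t) (hA : 0 < A) (hB : 0 < B) :
    ‖(∫ s in (-A)..B, Complex.exp (Complex.I * ((-(t / 2 * s ^ 2) : ℝ) : ℂ)))
      - (Real.sqrt (2 * Real.pi / t) : ℂ) * Complex.exp (-Complex.I * ((Real.pi / 4 : ℝ) : ℂ))‖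
      ≤ 2 / (t * A) + 2 / (t * B) := by
  have hpi := Real.pi_pos
  let bf : ℝ → ℂ := fun e => (e : ℂ) + Complex.I * ((t / 2 : ℝ) : ℂ)
  have hbf : Continuous bf := by fun_prop
  have hcont : Continuous (fun e : ℝ => ∫ s in (-A)..B, Complex.exp (-(bf e) * (s:ℂ) ^ 2)) := by
    apply intervalIntegral.continuous_parametric_intervalIntegral_of_continuous'
    fun_prop
  have hb0 : bf 0 = Complex.I * ((t / 2 : ℝ) : ℂ) := by simp [bf]
  have hb0ne : bf 0 ≠ 0 := by
    rw [hb0]; simp [ht.ne']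
  have hdiv : (Real.pi : ℂ) / bf 0 = ((2 * Real.pi / t : ℝ) : ℂ) * (-Complex.I) := by
    rw [div_eq_iff hb0ne, hb0]
    push_cast
    have : (t:ℂ) ≠ 0 := by exact_mod_cast ht.ne'
    field_simp
    simp
  have hval : ((Real.pi : ℂ) / bf 0) ^ (1 / 2 : ℂ) =
      (Real.sqrt (2 * Real.pi / t) : ℂ) * Complex.exp (-Complex.I * ((Real.pi / 4 : ℝ) : ℂ)) := by
    have hr : 0 < 2 * Real.pi / t := by positivity
    have hsq : Real.sqrt (2 * Real.pi / t) = Real.exp (Real.log (2 * Real.pi / t) / 2) := by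
      rw [Real.sqrt_eq_rpow, Real.rpow_def_of_pos hr]; congr 1; ring
    rw [hsq, Complex.ofReal_exp, ← Complex.exp_add, hdiv, Complex.cpow_def_of_ne_zero
      (by simp [hpi.ne', ht.ne']), Complex.log_ofReal_mul hr (by simp), Complex.log_neg_I]
    congr 1
    push_cast
    ring
  have hcp : ContinuousAt (fun e : ℝ => ((Real.pi : ℂ) / bf e) ^ (1 / 2 : ℂ)) 0 := by
    apply ContinuousAt.cpow
    · exact continuousAt_const.div hbf.continuousAt hb0ne
    · exact continuousAt_const
    · rw [hdiv]
      rw [Complex.mem_slitPlane_iff]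
      right
      rw [Complex.im_ofReal_mul]
      simp [hpi.ne', ht.ne']
  have hl := ((hcont.continuousAt (x := 0)).sub hcp).norm
  have hl2 : Filter.Tendsto _ (nhdsWithin (0:ℝ) (Set.Ioi 0)) _ := hl.tendsto.mono_left nhdsWithin_le_nhds
  have := le_of_tendsto (b := 2 / (t * A) + 2 / (t * B)) hl2 (by
    filter_upwards [self_mem_nhdsWithin] with e he
    have he : 0 < e := he
    have hre : (bf e).re = e := by simp [bf]
    have him : (bf e).im = t / 2 := by simp [bf]
    have h1 := gauss_trunc (bf e) (by rw [hre]; exact he) A B hA hB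
    have h2 : t / 2 ≤ ‖bf e‖ := by
      have := Complex.abs_im_le_norm (bf e)
      rw [him, abs_of_pos (by positivity)] at this
      exact this
    refine h1.trans ?_
    have : ∀ Y : ℝ, 0 < Y → 1 / (‖bf e‖ * Y) ≤ 2 / (t * Y) := by
      intro Y hY
      calc 1 / (‖bf e‖ * Y) ≤ 1 / (t / 2 * Y) := by gcongr
        _ = _ := by field_simp
    exact add_le_add (this A hA) (this B hB))
  simp only [Pi.sub_apply] at this
  rw [hval] at this
  have he : ∀ s : ℝ, Complex.exp (Complex.I * ((-(t / 2 * s ^ 2) : ℝ) : ℂ)) =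
      Complex.exp (-(bf 0) * (s:ℂ) ^ 2) := by
    intro s
    rw [hb0]; push_cast; congr 1; ring
  simp_rw [he]
  exact this

lemma osc (Φ Φ' q1 q1' q2 q2' : ℝ → ℝ) (x y M1 M2 : ℝ) (hxy : x ≤ y)
    (hΦ : ∀ z ∈ Set.Icc x y, HasDerivAt Φ (Φ' z) z)
    (h1 : ∀ z ∈ Set.Icc x y, HasDerivAt q1 (q1' z) z)
    (h2 : ∀ z ∈ Set.Icc x y, HasDerivAt q2 (q2' z) z)
    (cΦ : ContinuousOn Φ' (Set.Icc x y)) (c1 : ContinuousOn q1' (Set.Icc x y))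
    (c2 : ContinuousOn q2' (Set.Icc x y))
    (p1 : ∀ z ∈ Set.Icc x y, 0 ≤ q1' z) (p2 : ∀ z ∈ Set.Icc x y, q2' z ≤ 0)
    (b1 : ∀ z ∈ Set.Icc x y, 0 ≤ q1 z ∧ q1 z ≤ M1)
    (b2 : ∀ z ∈ Set.Icc x y, 0 ≤ q2 z ∧ q2 z ≤ M2) :
    ‖∫ z in x..y, Complex.exp (Complex.I * (Φ z : ℂ)) * ((Φ' z * (q1 z * q2 z) : ℝ) : ℂ)‖
      ≤ 4 * (M1 * M2) := by
  have hu : Set.uIcc x y = Set.Icc x y := Set.uIcc_of_le hxy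
  have hx : x ∈ Set.Icc x y := ⟨le_rfl, hxy⟩
  have hy : y ∈ Set.Icc x y := ⟨hxy, le_rfl⟩
  have hM1 : 0 ≤ M1 := (b1 x hx).1.trans (b1 x hx).2
  have hM2 : 0 ≤ M2 := (b2 x hx).1.trans (b2 x hx).2
  have cΦ0 : ContinuousOn Φ (Set.Icc x y) := fun z hz => (hΦ z hz).continuousAt.continuousWithinAt
  have cq1 : ContinuousOn q1 (Set.Icc x y) := fun z hz => (h1 z hz).continuousAt.continuousWithinAt
  have cq2 : ContinuousOn q2 (Set.Icc x y) := fun z hz => (h2 z hz).continuousAt.continuousWithinAt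
  have cE : ContinuousOn (fun z => Complex.exp (Complex.I * (Φ z : ℂ))) (Set.Icc x y) := by fun_prop
  have hE : ∀ z, ‖Complex.exp (Complex.I * (Φ z : ℂ))‖ = 1 := by
    intro z; rw [mul_comm]; exact Complex.norm_exp_ofReal_mul_I _
  have hF : ∀ z ∈ Set.uIcc x y, HasDerivAt
      (fun z => -Complex.I * Complex.exp (Complex.I * (Φ z : ℂ)) * ((q1 z * q2 z : ℝ) : ℂ))
      (Complex.exp (Complex.I * (Φ z : ℂ)) * ((Φ' z * (q1 z * q2 z) : ℝ) : ℂ) +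
       -Complex.I * Complex.exp (Complex.I * (Φ z : ℂ)) * ((q1' z * q2 z + q1 z * q2' z : ℝ) : ℂ)) z := by
    intro z hz
    rw [hu] at hz
    have d1 := ((hΦ z hz).ofReal_comp.const_mul Complex.I).cexp.const_mul (-Complex.I)
    have d2 := ((h1 z hz).mul (h2 z hz)).ofReal_comp
    refine (d1.mul d2).congr_deriv ?_
    simp only [Pi.mul_apply]
    push_cast
    linear_combination (-Complex.exp (Complex.I * (Φ z : ℂ)) * Φ' z * (q1 z * q2 z)) * Complex.I_sq
  have i1 : IntervalIntegrable (fun z => Complex.exp (Complex.I * (Φ z : ℂ)) * ((Φ' z * (q1 z * q2 z) : ℝ) : ℂ)) volume x y := by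
    apply ContinuousOn.intervalIntegrable
    rw [hu]
    apply cE.mul
    exact Complex.continuous_ofReal.comp_continuousOn (cΦ.mul (cq1.mul cq2))
  have i2 : IntervalIntegrable (fun z => -Complex.I * Complex.exp (Complex.I * (Φ z : ℂ)) * ((q1' z * q2 z + q1 z * q2' z : ℝ) : ℂ)) volume x y := by
    apply ContinuousOn.intervalIntegrable
    rw [hu]
    apply (continuousOn_const.mul cE).mul
    exact Complex.continuous_ofReal.comp_continuousOn ((c1.mul cq2).add (cq1.mul c2))
  have key := intervalIntegral.integral_eq_sub_of_hasDerivAt hF (i1.add i2)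
  rw [intervalIntegral.integral_add i1 i2] at key
  have j1 : IntervalIntegrable q1' volume x y := by
    apply ContinuousOn.intervalIntegrable; rwa [hu]
  have j2 : IntervalIntegrable q2' volume x y := by
    apply ContinuousOn.intervalIntegrable; rwa [hu]
  have hbd : ‖∫ z in x..y, -Complex.I * Complex.exp (Complex.I * (Φ z : ℂ)) * ((q1' z * q2 z + q1 z * q2' z : ℝ) : ℂ)‖
      ≤ ∫ z in x..y, (M2 * q1' z + M1 * (- q2' z)) := by
    apply intervalIntegral.norm_integral_le_of_norm_le hxy
    · refine Filter.Eventually.of_forall fun z hz => ?_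
      have hz : z ∈ Set.Icc x y := ⟨hz.1.le, hz.2⟩
      rw [norm_mul, norm_mul, hE, norm_neg, Complex.norm_I, one_mul, one_mul, Complex.norm_real,
        Real.norm_eq_abs, abs_le]
      have a1 := mul_nonneg (p1 z hz) (b2 z hz).1
      have a2 := mul_nonneg (p1 z hz) (sub_nonneg.mpr (b2 z hz).2)
      have a3 := mul_nonneg (neg_nonneg.mpr (p2 z hz)) (b1 z hz).1
      have a4 := mul_nonneg (neg_nonneg.mpr (p2 z hz)) (sub_nonneg.mpr (b1 z hz).2)
      constructor <;> nlinarith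
    · exact (j1.const_mul M2).add (j2.neg.const_mul M1)
  have hv : ∫ z in x..y, (M2 * q1' z + M1 * (- q2' z)) = M2 * (q1 y - q1 x) + M1 * (q2 x - q2 y) := by
    have j3 : IntervalIntegrable (fun z => M1 * (-q2' z)) volume x y := j2.neg.const_mul M1
    rw [intervalIntegral.integral_add (j1.const_mul M2) j3,
      intervalIntegral.integral_const_mul, intervalIntegral.integral_const_mul,
      intervalIntegral.integral_neg,
      intervalIntegral.integral_eq_sub_of_hasDerivAt (by rwa [hu]) j1,
      intervalIntegral.integral_eq_sub_of_hasDerivAt (by rwa [hu]) j2]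
    ring
  rw [hv] at hbd
  have hend : ∀ z ∈ Set.Icc x y, ‖-Complex.I * Complex.exp (Complex.I * (Φ z : ℂ)) * ((q1 z * q2 z : ℝ) : ℂ)‖ ≤ M1 * M2 := by
    intro z hz
    rw [norm_mul, norm_mul, hE, norm_neg, Complex.norm_I, one_mul, one_mul, Complex.norm_real,
        Real.norm_of_nonneg (mul_nonneg (b1 z hz).1 (b2 z hz).1)]
    exact mul_le_mul (b1 z hz).2 (b2 z hz).2 (b2 z hz).1 hM1
  have e1 := hend x hx
  have e2 := hend y hy
  rw [eq_sub_of_add_eq key]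
  refine (norm_sub_le _ _).trans ?_
  have e3 := (norm_sub_le (-Complex.I * Complex.exp (Complex.I * (Φ y : ℂ)) * ((q1 y * q2 y : ℝ) : ℂ)) (-Complex.I * Complex.exp (Complex.I * (Φ x : ℂ)) * ((q1 x * q2 x : ℝ) : ℂ)))
  have f1 : M2 * (q1 y - q1 x) ≤ M2 * M1 := mul_le_mul_of_nonneg_left (by linarith [(b1 x hx).1, (b1 y hy).2]) hM2
  have f2 : M1 * (q2 x - q2 y) ≤ M1 * M2 := mul_le_mul_of_nonneg_left (by linarith [(b2 y hy).1, (b2 x hx).2]) hM1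
  linarith

noncomputable def Ph (t z : ℝ) : ℝ := t * (Real.log z - z) - 2 * Real.pi / z + Real.pi / z ^ 2
noncomputable def Wt (δ z : ℝ) : ℝ := Real.sqrt z * Real.sqrt (1 - δ / z ^ 2) / z
noncomputable def Hf (t δ z : ℝ) : ℂ := Complex.exp (Complex.I * (Ph t z : ℂ)) * (Wt δ z : ℂ)

lemma Ph_deriv (t δ z : ℝ) (h : t * δ = 2 * Real.pi) (hz : 0 < z) :
    HasDerivAt (Ph t) (t * (1 - z) * (z ^ 2 - δ) / z ^ 3) z := by
  have h1 := ((Real.hasDerivAt_log hz.ne').sub (hasDerivAt_id z)).const_mul t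
  have h2 := (hasDerivAt_inv hz.ne').const_mul (2 * Real.pi)
  have h3 := ((hasDerivAt_pow 2 z).inv (by positivity)).const_mul Real.pi
  have h4 := (h1.sub h2).add h3
  refine (h4.congr_deriv ?_).congr_of_eventuallyEq ?_
  · rw [show Real.pi = t * δ / 2 by linarith]
    simp only [Nat.cast_ofNat, Nat.add_one_sub_one, pow_one]
    field_simp
    ring
  · refine Filter.Eventually.of_forall fun x => ?_
    simp [Ph, div_eq_mul_inv]

lemma Hf_cont (t δ x y : ℝ) (hx : 0 < x) : ContinuousOn (Hf t δ) (Set.Icc x y) := by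
  have hz : ∀ z ∈ Set.Icc x y, z ≠ 0 := fun z hz => (lt_of_lt_of_le hx hz.1).ne'
  have hz2 : ∀ z ∈ Set.Icc x y, z ^ 2 ≠ 0 := fun z h => pow_ne_zero 2 (hz z h)
  unfold Hf Ph Wt
  fun_prop (disch := assumption)

lemma Hf_int (t δ x y : ℝ) (hx : 0 < x) (hxy : x ≤ y) : IntervalIntegrable (Hf t δ) volume x y := by
  apply ContinuousOn.intervalIntegrable
  rw [Set.uIcc_of_le hxy]
  exact Hf_cont t δ x y hx

lemma vpos (δ x z : ℝ) (hδ : 0 < δ) (hx : 0 < x) (hd : δ < x ^ 2) (hz : x ≤ z) :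
    0 < 1 - δ / x ^ 2 ∧ 1 - δ / x ^ 2 ≤ 1 - δ / z ^ 2 := by
  constructor
  · rw [sub_pos, div_lt_one (by positivity)]; exact hd
  · have : δ / z ^ 2 ≤ δ / x ^ 2 := by gcongr
    linarith

lemma q_deriv (δ z : ℝ) (hz : 0 < z) (hv : 0 < 1 - δ / z ^ 2) :
    HasDerivAt (fun z => (Real.sqrt (1 - δ / z ^ 2))⁻¹)
      (-(δ / z ^ 3 / Real.sqrt (1 - δ / z ^ 2)) / (Real.sqrt (1 - δ / z ^ 2)) ^ 2) z := by
  have h0 : HasDerivAt (fun z : ℝ => 1 - δ / z ^ 2) (2 * δ / z ^ 3) z := by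
    have h3 := (((hasDerivAt_pow 2 z).inv (by positivity)).const_mul δ).const_sub 1
    refine (h3.congr_deriv ?_).congr_of_eventuallyEq ?_
    · simp only [Nat.cast_ofNat, Nat.add_one_sub_one, pow_one]
      field_simp
    · refine Filter.Eventually.of_forall fun x => ?_
      simp [div_eq_mul_inv]
  have h1 := (h0.sqrt hv.ne').inv (Real.sqrt_pos.mpr hv).ne'
  refine h1.congr_deriv ?_
  congr 2
  have := Real.sqrt_pos.mpr hv
  field_simp

lemma regionA (t δ x y M : ℝ) (ht : 0 < t) (h : t * δ = 2 * Real.pi) (hδ : 0 < δ) (hx : 0 < x)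
    (hd : δ < x ^ 2) (hxy : x ≤ y) (hy : y < 1) (hM : (Real.sqrt (1 - δ / x ^ 2))⁻¹ ≤ M) :
    ‖∫ z in x..y, Hf t δ z‖ ≤ 4 * ((1 - y)⁻¹ * M) / t := by
  have hz0 : ∀ z ∈ Set.Icc x y, 0 < z := fun z hz => lt_of_lt_of_le hx hz.1
  have hz1 : ∀ z ∈ Set.Icc x y, 0 < 1 - z := fun z hz => by linarith [hz.2]
  have hv : ∀ z ∈ Set.Icc x y, 0 < 1 - δ / z ^ 2 := fun z hz =>
    lt_of_lt_of_le (vpos δ x z hδ hx hd hz.1).1 (vpos δ x z hδ hx hd hz.1).2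
  have hsv : ∀ z ∈ Set.Icc x y, 0 < Real.sqrt (1 - δ / z ^ 2) := fun z hz => Real.sqrt_pos.mpr (hv z hz)
  have hsz : ∀ z ∈ Set.Icc x y, 0 < Real.sqrt z := fun z hz => Real.sqrt_pos.mpr (hz0 z hz)
  have n1 : ∀ z ∈ Set.Icc x y, z ^ 3 ≠ 0 := fun z hz => pow_ne_zero 3 (hz0 z hz).ne'
  have n2 : ∀ z ∈ Set.Icc x y, z ^ 2 ≠ 0 := fun z hz => pow_ne_zero 2 (hz0 z hz).ne'
  have n3 : ∀ z ∈ Set.Icc x y, 1 - z ≠ 0 := fun z hz => (hz1 z hz).ne'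
  have n4 : ∀ z ∈ Set.Icc x y, (1 - z) ^ 2 ≠ 0 := fun z hz => pow_ne_zero 2 (hz1 z hz).ne'
  have n5 : ∀ z ∈ Set.Icc x y, Real.sqrt (1 - δ / z ^ 2) ≠ 0 := fun z hz => (hsv z hz).ne'
  have n6 : ∀ z ∈ Set.Icc x y, Real.sqrt (1 - δ / z ^ 2) ^ 2 ≠ 0 := fun z hz => pow_ne_zero 2 (hsv z hz).ne'
  have n7 : ∀ z ∈ Set.Icc x y, 2 * Real.sqrt z ≠ 0 := fun z hz => by have := hsz z hz; positivity
  have key := osc (Ph t) (fun z => t * (1 - z) * (z ^ 2 - δ) / z ^ 3)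
    (fun z => Real.sqrt z * (1 - z)⁻¹)
    (fun z => 1 / (2 * Real.sqrt z) * (1 - z)⁻¹ + Real.sqrt z * (1 / (1 - z) ^ 2))
    (fun z => (Real.sqrt (1 - δ / z ^ 2))⁻¹)
    (fun z => -(δ / z ^ 3 / Real.sqrt (1 - δ / z ^ 2)) / (Real.sqrt (1 - δ / z ^ 2)) ^ 2)
    x y ((1 - y)⁻¹) M hxy
    (fun z hz => Ph_deriv t δ z h (hz0 z hz))
    (fun z hz => by
      have h1 := Real.hasDerivAt_sqrt (hz0 z hz).ne'
      have h2 := ((hasDerivAt_id z).const_sub 1).inv (n3 z hz)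
      exact (h1.mul h2).congr_deriv (by simp))
    (fun z hz => q_deriv δ z (hz0 z hz) (hv z hz))
    (by fun_prop (disch := assumption)) (by fun_prop (disch := assumption))
    (by fun_prop (disch := assumption))
    (fun z hz => by
      have := hz1 z hz; have := hsz z hz; positivity)
    (fun z hz => by
      have := hsv z hz; have := hz0 z hz
      rw [neg_div, neg_nonpos]; positivity)
    (fun z hz => by
      have a1 := hz1 z hz; have a2 := hsz z hz
      refine ⟨by positivity, ?_⟩
      have h1 : Real.sqrt z ≤ 1 := Real.sqrt_le_one.mpr (by linarith)
      have h2 : (1 - z)⁻¹ ≤ (1 - y)⁻¹ := inv_anti₀ (by linarith) (by linarith [hz.2])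
      calc _ ≤ 1 * (1 - y)⁻¹ := mul_le_mul h1 h2 (by positivity) (by norm_num)
        _ = _ := one_mul _)
    (fun z hz => by
      have := hsv z hz
      refine ⟨by positivity, le_trans ?_ hM⟩
      have := vpos δ x z hδ hx hd hz.1
      exact inv_anti₀ (Real.sqrt_pos.mpr this.1) (Real.sqrt_le_sqrt this.2))
  have heq : ∫ z in x..y, Hf t δ z = ((t⁻¹ : ℝ) : ℂ) * ∫ z in x..y, Complex.exp (Complex.I * (Ph t z : ℂ)) *
      ((t * (1 - z) * (z ^ 2 - δ) / z ^ 3 * (Real.sqrt z * (1 - z)⁻¹ * (Real.sqrt (1 - δ / z ^ 2))⁻¹) : ℝ) : ℂ) := by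
    rw [← intervalIntegral.integral_const_mul]
    apply intervalIntegral.integral_congr
    intro z hz
    rw [Set.uIcc_of_le hxy] at hz
    simp only [Hf]
    rw [mul_left_comm, ← Complex.ofReal_mul]
    congr 2
    unfold Wt
    have a1 := n3 z hz; have a2 := hz0 z hz; have a3 := n5 z hz
    have a4 : z ^ 2 - δ = z ^ 2 * (Real.sqrt (1 - δ / z ^ 2)) ^ 2 := by
      rw [Real.sq_sqrt (hv z hz).le]; field_simp
    generalize Real.sqrt (1 - δ / z ^ 2) = v at *
    rw [a4]
    field_simp
  rw [heq, norm_mul, Complex.norm_real, Real.norm_of_nonneg (by positivity), div_eq_inv_mul]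
  gcongr

lemma regionB (t δ x y : ℝ) (ht : 0 < t) (h : t * δ = 2 * Real.pi) (hδ : 0 < δ) (hδ2 : δ ≤ 1 / 2)
    (hx : 1 < x) (hxy : x ≤ y) (hy : y ≤ 4) :
    ‖∫ z in x..y, Hf t δ z‖ ≤ 16 * (x - 1)⁻¹ / t := by
  have hz0 : ∀ z ∈ Set.Icc x y, 0 < z := fun z hz => by linarith [hz.1]
  have hz1 : ∀ z ∈ Set.Icc x y, 0 < z - 1 := fun z hz => by linarith [hz.1]
  have hv2 : ∀ z ∈ Set.Icc x y, 1 / 2 ≤ 1 - δ / z ^ 2 := fun z hz => by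
    have := (vpos δ 1 z hδ one_pos (by linarith) (by linarith [hz.1])).2
    norm_num at this; linarith
  have hv : ∀ z ∈ Set.Icc x y, 0 < 1 - δ / z ^ 2 := fun z hz => by linarith [hv2 z hz]
  have hsv : ∀ z ∈ Set.Icc x y, 0 < Real.sqrt (1 - δ / z ^ 2) := fun z hz => Real.sqrt_pos.mpr (hv z hz)
  have hsz : ∀ z ∈ Set.Icc x y, 0 < Real.sqrt z := fun z hz => Real.sqrt_pos.mpr (hz0 z hz)
  have n1 : ∀ z ∈ Set.Icc x y, z ^ 3 ≠ 0 := fun z hz => pow_ne_zero 3 (hz0 z hz).ne'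
  have n2 : ∀ z ∈ Set.Icc x y, z ^ 2 ≠ 0 := fun z hz => pow_ne_zero 2 (hz0 z hz).ne'
  have n3 : ∀ z ∈ Set.Icc x y, z - 1 ≠ 0 := fun z hz => (hz1 z hz).ne'
  have n4 : ∀ z ∈ Set.Icc x y, (z - 1) ^ 2 ≠ 0 := fun z hz => pow_ne_zero 2 (hz1 z hz).ne'
  have n5 : ∀ z ∈ Set.Icc x y, Real.sqrt (1 - δ / z ^ 2) ≠ 0 := fun z hz => (hsv z hz).ne'
  have n6 : ∀ z ∈ Set.Icc x y, Real.sqrt (1 - δ / z ^ 2) ^ 2 ≠ 0 := fun z hz => pow_ne_zero 2 (hsv z hz).ne'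
  have n7 : ∀ z ∈ Set.Icc x y, 2 * Real.sqrt z ≠ 0 := fun z hz => by have := hsz z hz; positivity
  have key := osc (Ph t) (fun z => t * (1 - z) * (z ^ 2 - δ) / z ^ 3)
    (fun z => Real.sqrt z)
    (fun z => 1 / (2 * Real.sqrt z))
    (fun z => (z - 1)⁻¹ * (Real.sqrt (1 - δ / z ^ 2))⁻¹)
    (fun z => -1 / (z - 1) ^ 2 * (Real.sqrt (1 - δ / z ^ 2))⁻¹ + (z - 1)⁻¹ *
      (-(δ / z ^ 3 / Real.sqrt (1 - δ / z ^ 2)) / (Real.sqrt (1 - δ / z ^ 2)) ^ 2))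
    x y 2 ((x - 1)⁻¹ * 2) hxy
    (fun z hz => Ph_deriv t δ z h (hz0 z hz))
    (fun z hz => Real.hasDerivAt_sqrt (hz0 z hz).ne')
    (fun z hz => by
      have h2 := ((hasDerivAt_id z).sub_const 1).inv (n3 z hz)
      exact (h2.mul (q_deriv δ z (hz0 z hz) (hv z hz))).congr_deriv (by simp))
    (by fun_prop (disch := assumption)) (by fun_prop (disch := assumption))
    (by fun_prop (disch := assumption))
    (fun z hz => by
      have := hsz z hz; positivity)
    (fun z hz => by
      have := hsv z hz; have := hz0 z hz; have := hz1 z hz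
      rw [neg_div, neg_div, neg_mul, mul_neg, ← neg_add, neg_nonpos]; positivity)
    (fun z hz => by
      have a2 := hsz z hz
      refine ⟨by positivity, ?_⟩
      rw [Real.sqrt_le_left (by norm_num)]; linarith [hz.2])
    (fun z hz => by
      have := hsv z hz; have := hz1 z hz
      refine ⟨by positivity, ?_⟩
      have h2 : (z - 1)⁻¹ ≤ (x - 1)⁻¹ := inv_anti₀ (by linarith) (by linarith [hz.1])
      have h3 : (Real.sqrt (1 - δ / z ^ 2))⁻¹ ≤ 2 := by
        rw [inv_le_comm₀ (by positivity) (by norm_num)]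
        apply Real.le_sqrt_of_sq_le
        have := hv2 z hz
        norm_num; linarith
      exact mul_le_mul h2 h3 (by positivity) (inv_nonneg.mpr (by linarith)))
  have heq : ∫ z in x..y, Hf t δ z = ((-t⁻¹ : ℝ) : ℂ) * ∫ z in x..y, Complex.exp (Complex.I * (Ph t z : ℂ)) *
      ((t * (1 - z) * (z ^ 2 - δ) / z ^ 3 * (Real.sqrt z * ((z - 1)⁻¹ * (Real.sqrt (1 - δ / z ^ 2))⁻¹)) : ℝ) : ℂ) := by
    rw [← intervalIntegral.integral_const_mul]
    apply intervalIntegral.integral_congr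
    intro z hz
    rw [Set.uIcc_of_le hxy] at hz
    simp only [Hf]
    rw [mul_left_comm, ← Complex.ofReal_mul]
    congr 2
    unfold Wt
    have a1 := n3 z hz; have a2 := hz0 z hz; have a3 := n5 z hz
    have a4 : z ^ 2 - δ = z ^ 2 * (Real.sqrt (1 - δ / z ^ 2)) ^ 2 := by
      rw [Real.sq_sqrt (hv z hz).le]; field_simp
    generalize Real.sqrt (1 - δ / z ^ 2) = v at *
    rw [a4]
    field_simp
    ring
  rw [heq, norm_mul, Complex.norm_real, norm_neg, Real.norm_of_nonneg (by positivity), div_eq_inv_mul]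
  have : (16 : ℝ) * (x - 1)⁻¹ = 4 * (2 * ((x - 1)⁻¹ * 2)) := by ring
  rw [this]
  gcongr

lemma exp_diff (P Q : ℝ) : ‖Complex.exp (Complex.I * (P:ℂ)) - Complex.exp (Complex.I * (Q:ℂ))‖ ≤ |P - Q| := by
  have h := Real.norm_exp_I_mul_ofReal_sub_one_le (x := P - Q)
  have : Complex.exp (Complex.I * (P:ℂ)) - Complex.exp (Complex.I * (Q:ℂ)) =
      Complex.exp (Complex.I * (Q:ℂ)) * (Complex.exp (Complex.I * ((P - Q : ℝ):ℂ)) - 1) := by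
    rw [mul_sub, ← Complex.exp_add, mul_one]; congr 2; push_cast; ring
  rw [this, norm_mul, mul_comm Complex.I (Q:ℂ), Complex.norm_exp_ofReal_mul_I, one_mul]
  exact h

lemma log_bd (y : ℝ) (hy : |y| ≤ 1 / 10) :
    |Real.log (1 + y) - y + y ^ 2 / 2 - y ^ 3 / 3| ≤ 2 * y ^ 4 := by
  have h := Real.abs_log_sub_add_sum_range_le (x := -y) (by rw [abs_neg]; linarith) 3
  simp only [Finset.sum_range_succ, Finset.sum_range_zero] at h
  norm_num at h
  have h4 : |y| ^ 4 = y ^ 4 := by rw [← abs_pow]; exact abs_of_nonneg (by positivity)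
  rw [h4] at h
  have : y ^ 4 / (1 - |y|) ≤ 2 * y ^ 4 := by
    rw [div_le_iff₀ (by linarith)]
    nlinarith [pow_nonneg (sq_nonneg y) 2, (by positivity : 0 ≤ y ^ 4)]
  refine le_trans (le_of_eq ?_) (h.trans this)
  congr 1
  ring

set_option maxHeartbeats 1000000 in
lemma window_pt (T δ z : ℝ) (hT : 10 ≤ T) (h : T ^ 3 * δ = 2 * Real.pi) (hz : |z - 1| ≤ 1 / T) :
    ‖Hf (T ^ 3) δ z - Complex.exp (Complex.I * ((-T ^ 3 - Real.pi - T ^ 3 / 2 * ((z - 1) - (z - 1) ^ 2 / 3) ^ 2 : ℝ) : ℂ))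
      * ((1 - 2 / 3 * (z - 1) : ℝ) : ℂ)‖ ≤ 13 / T := by
  have hpi := Real.pi_pos
  have hpi4 := Real.pi_lt_d2
  have hT0 : 0 < T := by linarith
  have hr : 1 / T ≤ 1 / 10 := by
    apply one_div_le_one_div_of_le <;> linarith
  have hr0 : 0 < 1 / T := by positivity
  obtain ⟨y, hy⟩ : ∃ y, y = z - 1 := ⟨_, rfl⟩
  rw [← hy] at hz ⊢
  have hzy : z = 1 + y := by rw [hy]; ring
  have hy10 : |y| ≤ 1 / 10 := hz.trans hr
  have hyb := abs_le.mp hy10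
  have hzp : 9 / 10 ≤ z := by linarith
  have hz0 : 0 < z := by linarith
  have hzq : z ≤ 11 / 10 := by linarith
  have hδ0 : 0 < δ := by
    have : δ = 2 * Real.pi / T ^ 3 := by field_simp; linarith
    rw [this]; positivity
  have hδr : δ ≤ 1 / 10 * (1 / T) := by
    have : δ = 2 * Real.pi * (1 / T) * (1 / T) * (1 / T) := by field_simp; linarith
    rw [this]
    calc 2 * Real.pi * (1 / T) * (1 / T) * (1 / T) ≤ 2 * 3.15 * (1 / 10) * (1 / 10) * (1 / T) := by gcongr
      _ ≤ 1 / 10 * (1 / T) := by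
        apply mul_le_mul_of_nonneg_right _ hr0.le; norm_num
  have hPQ : |Ph (T ^ 3) z - (-T ^ 3 - Real.pi - T ^ 3 / 2 * (y - y ^ 2 / 3) ^ 2)| ≤ 5 * (1 / T) := by
    have e1 : Ph (T ^ 3) z - (-T ^ 3 - Real.pi - T ^ 3 / 2 * (y - y ^ 2 / 3) ^ 2) =
        T ^ 3 * ((Real.log (1 + y) - y + y ^ 2 / 2 - y ^ 3 / 3) + y ^ 4 / 18) + Real.pi * (y / z) ^ 2 := by
      unfold Ph
      rw [← hzy]
      have : y = z - 1 := hy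
      rw [this]
      field_simp
      ring
    rw [e1]
    have e2 := log_bd y hy10
    have e3 : |(Real.log (1 + y) - y + y ^ 2 / 2 - y ^ 3 / 3) + y ^ 4 / 18| ≤ 3 * y ^ 4 := by
      refine (abs_add_le _ _).trans ?_
      rw [abs_of_nonneg (by positivity : 0 ≤ y ^ 4 / 18)]
      have hy4 : 0 ≤ y ^ 4 := by positivity
      linarith
    have e4 : y ^ 4 ≤ (1 / T) ^ 4 := by
      have : |y| ^ 4 ≤ (1 / T) ^ 4 := by gcongr
      rwa [← abs_pow, abs_of_nonneg (by positivity)] at this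
    have e5 : y ^ 2 ≤ 1 / 10 * (1 / T) := by
      rw [← sq_abs, sq]
      gcongr
    have e6 : (y / z) ^ 2 ≤ 2 * y ^ 2 := by
      rw [div_pow, div_le_iff₀ (by positivity)]
      have : 1 ≤ 2 * z ^ 2 := by nlinarith
      nlinarith [sq_nonneg y]
    refine (abs_add_le _ _).trans ?_
    rw [abs_mul, abs_of_pos (by positivity : 0 < T ^ 3), abs_of_nonneg (by positivity : 0 ≤ Real.pi * (y / z) ^ 2)]
    have e7 : T ^ 3 * |(Real.log (1 + y) - y + y ^ 2 / 2 - y ^ 3 / 3) + y ^ 4 / 18| ≤ T ^ 3 * (3 * (1 / T) ^ 4) := by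
      gcongr
      linarith
    have e8 : T ^ 3 * (3 * (1 / T) ^ 4) = 3 * (1 / T) := by field_simp
    have e9 : Real.pi * (y / z) ^ 2 ≤ 3.15 * (2 * (1 / 10 * (1 / T))) := by
      apply mul_le_mul hpi4.le _ (by positivity) (by norm_num)
      linarith
    linarith
  -- weight
  have hsz : 0 < Real.sqrt z := Real.sqrt_pos.mpr hz0
  have hsz1 : 1 / 2 ≤ Real.sqrt z := by apply Real.le_sqrt_of_sq_le; norm_num; linarith
  have hss := Real.sq_sqrt hz0.le
  have hwz : Real.sqrt z / z = 1 / Real.sqrt z := by rw [Real.sqrt_div_self']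
  have hinv : |1 / Real.sqrt z - 1| ≤ 2 * (1 / T) := by
    have : 1 / Real.sqrt z - 1 = -y / (Real.sqrt z * (1 + Real.sqrt z)) := by
      rw [eq_div_iff (by positivity)]
      field_simp
      nlinarith
    rw [this, abs_div, abs_neg, abs_of_pos (by positivity : 0 < Real.sqrt z * (1 + Real.sqrt z)),
      div_le_iff₀ (by positivity)]
    have : 1 / 2 ≤ Real.sqrt z * (1 + Real.sqrt z) := by nlinarith
    nlinarith
  have hdz : δ / z ^ 2 ≤ 2 * δ := by
    rw [div_le_iff₀ (by positivity)]
    have : 1 ≤ 2 * z ^ 2 := by nlinarith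
    nlinarith
  have hdz0 : 0 < δ / z ^ 2 := by positivity
  have hv0 : 0 ≤ 1 - δ / z ^ 2 := by linarith
  have hv1 : Real.sqrt (1 - δ / z ^ 2) ≤ 1 := Real.sqrt_le_one.mpr (by linarith)
  have hv2 : 1 - δ / z ^ 2 ≤ Real.sqrt (1 - δ / z ^ 2) := by
    apply Real.le_sqrt_of_sq_le; nlinarith
  have hvn := Real.sqrt_nonneg (1 - δ / z ^ 2)
  have hW : Wt δ z = 1 / Real.sqrt z * Real.sqrt (1 - δ / z ^ 2) := by
    unfold Wt; rw [← hwz]; ring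
  have hib : 1 / Real.sqrt z ≤ 2 := by
    rw [div_le_iff₀ hsz]; linarith
  have hip : 0 < 1 / Real.sqrt z := by positivity
  have hW2 : |Wt δ z| ≤ 2 := by
    rw [hW, abs_of_nonneg (by positivity)]; nlinarith
  have hWs : |Wt δ z - (1 - 2 / 3 * y)| ≤ 3 * (1 / T) := by
    have : Wt δ z - (1 - 2 / 3 * y) = (1 / Real.sqrt z - 1) * Real.sqrt (1 - δ / z ^ 2) +
      (Real.sqrt (1 - δ / z ^ 2) - 1) + 2 / 3 * y := by rw [hW]; ring
    rw [this]
    have f1 : |(1 / Real.sqrt z - 1) * Real.sqrt (1 - δ / z ^ 2)| ≤ 2 * (1 / T) := by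
      rw [abs_mul, abs_of_nonneg hvn]
      calc _ ≤ 2 * (1 / T) * 1 := by gcongr
        _ = _ := mul_one _
    have f2 : |Real.sqrt (1 - δ / z ^ 2) - 1| ≤ 1 / 5 * (1 / T) := by
      rw [abs_le]; constructor <;> linarith
    have f3 : |2 / 3 * y| ≤ 2 / 3 * (1 / T) := by
      rw [abs_mul, abs_of_pos (by norm_num : (0:ℝ) < 2 / 3)]; gcongr
    have f4 := abs_add_three ((1 / Real.sqrt z - 1) * Real.sqrt (1 - δ / z ^ 2)) (Real.sqrt (1 - δ / z ^ 2) - 1) (2 / 3 * y)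
    linarith
  generalize -T ^ 3 - Real.pi - T ^ 3 / 2 * (y - y ^ 2 / 3) ^ 2 = Q at *
  have hsplit : Hf (T ^ 3) δ z - Complex.exp (Complex.I * (Q : ℂ)) * ((1 - 2 / 3 * y : ℝ) : ℂ) =
      (Complex.exp (Complex.I * (Ph (T ^ 3) z : ℂ)) - Complex.exp (Complex.I * (Q : ℂ))) * (Wt δ z : ℂ) +
      Complex.exp (Complex.I * (Q : ℂ)) * ((Wt δ z - (1 - 2 / 3 * y) : ℝ) : ℂ) := by
    unfold Hf; push_cast; ring
  rw [hsplit]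
  refine (norm_add_le _ _).trans ?_
  rw [norm_mul, norm_mul, Complex.norm_real, Complex.norm_real, mul_comm Complex.I (Q:ℂ),
    Complex.norm_exp_ofReal_mul_I, one_mul, mul_comm (Q:ℂ) Complex.I]
  have g1 := (exp_diff (Ph (T ^ 3) z) Q).trans hPQ
  have g2 : ‖Complex.exp (Complex.I * (Ph (T ^ 3) z : ℂ)) - Complex.exp (Complex.I * (Q : ℂ))‖ * ‖Wt δ z‖ ≤ 5 * (1 / T) * 2 :=
    mul_le_mul g1 hW2 (norm_nonneg _) (by positivity)
  rw [Real.norm_eq_abs (Wt δ z - (1 - 2 / 3 * y))]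
  have : 13 / T = 5 * (1 / T) * 2 + 3 * (1 / T) := by ring
  linarith

lemma window (T δ : ℝ) (hT : 10 ≤ T) (h : T ^ 3 * δ = 2 * Real.pi) :
    ‖(∫ z in (1 - 1 / T)..(1 + 1 / T), Hf (T ^ 3) δ z) -
      Complex.exp (Complex.I * ((-T ^ 3 - Real.pi : ℝ) : ℂ)) *
      ((Real.sqrt (2 * Real.pi / T ^ 3) : ℂ) * Complex.exp (-Complex.I * ((Real.pi / 4 : ℝ) : ℂ)))‖ ≤ 32 / T ^ 2 := by
  have hT0 : 0 < T := by linarith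
  have hr : 1 / T ≤ 1 / 10 := by
    apply one_div_le_one_div_of_le <;> linarith
  have hr0 : 0 < 1 / T := by positivity
  have hle : 1 - 1 / T ≤ 1 + 1 / T := by linarith
  let G : ℝ → ℂ := fun z => Complex.exp (Complex.I * ((-T ^ 3 - Real.pi - T ^ 3 / 2 * ((z - 1) - (z - 1) ^ 2 / 3) ^ 2 : ℝ) : ℂ))
      * ((1 - 2 / 3 * (z - 1) : ℝ) : ℂ)
  have hGc : Continuous G := by fun_prop
  have i1 := Hf_int (T ^ 3) δ (1 - 1 / T) (1 + 1 / T) (by linarith) hle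
  have i2 := hGc.intervalIntegrable (μ := volume) (1 - 1 / T) (1 + 1 / T)
  have d1 : ‖(∫ z in (1 - 1 / T)..(1 + 1 / T), Hf (T ^ 3) δ z) - ∫ z in (1 - 1 / T)..(1 + 1 / T), G z‖ ≤ 26 / T ^ 2 := by
    rw [← intervalIntegral.integral_sub i1 i2]
    have := intervalIntegral.norm_integral_le_of_norm_le_const (a := 1 - 1 / T) (b := 1 + 1 / T)
      (f := fun z => Hf (T ^ 3) δ z - G z) (C := 13 / T) (by
        intro z hz
        rw [Set.uIoc_of_le hle] at hz
        apply window_pt T δ z hT h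
        rw [abs_le]; constructor <;> linarith [hz.1, hz.2])
    refine this.trans (le_of_eq ?_)
    rw [abs_of_nonneg (by linarith)]
    field_simp; ring
  let sf : ℝ → ℝ := fun z => (z - 1) - (z - 1) ^ 2 / 3
  have hsf : ∀ z, HasDerivAt sf (1 - 2 / 3 * (z - 1)) z := by
    intro z
    have a1 := (hasDerivAt_id z).sub_const 1
    have a2 := a1.sub ((a1.pow 2).div_const 3)
    refine a2.congr_deriv ?_
    simp; ring
  have hG : ∫ z in (1 - 1 / T)..(1 + 1 / T), G z = Complex.exp (Complex.I * ((-T ^ 3 - Real.pi : ℝ) : ℂ)) *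
      ∫ s in (-(1 / T + (1 / T) ^ 2 / 3))..(1 / T - (1 / T) ^ 2 / 3), Complex.exp (Complex.I * ((-(T ^ 3 / 2 * s ^ 2) : ℝ) : ℂ)) := by
    have c := intervalIntegral.integral_deriv_smul_comp (a := 1 - 1 / T) (b := 1 + 1 / T) (f := sf)
      (f' := fun z => 1 - 2 / 3 * (z - 1))
      (g := fun s : ℝ => Complex.exp (Complex.I * ((-(T ^ 3 / 2 * s ^ 2) : ℝ) : ℂ)))
      (fun z _ => hsf z) (by fun_prop) (by fun_prop)
    have s1 : sf (1 - 1 / T) = -(1 / T + (1 / T) ^ 2 / 3) := by simp only [sf]; ring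
    have s2 : sf (1 + 1 / T) = 1 / T - (1 / T) ^ 2 / 3 := by simp only [sf]; ring
    rw [s1, s2] at c
    rw [← c, ← intervalIntegral.integral_const_mul]
    apply intervalIntegral.integral_congr
    intro z _
    simp only [G, sf, Function.comp, Complex.real_smul]
    rw [mul_left_comm, ← Complex.exp_add, mul_comm]
    congr 2
    push_cast; ring
  have hB : 1 / T / 2 ≤ 1 / T - (1 / T) ^ 2 / 3 := by nlinarith
  have hA : 1 / T ≤ 1 / T + (1 / T) ^ 2 / 3 := by nlinarith
  have fr := fresnel (T ^ 3) (1 / T + (1 / T) ^ 2 / 3) (1 / T - (1 / T) ^ 2 / 3) (by positivity) (by linarith) (by linarith)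
  have d2 : 2 / (T ^ 3 * (1 / T + (1 / T) ^ 2 / 3)) + 2 / (T ^ 3 * (1 / T - (1 / T) ^ 2 / 3)) ≤ 6 / T ^ 2 := by
    calc _ ≤ 2 / (T ^ 3 * (1 / T)) + 2 / (T ^ 3 * (1 / T / 2)) := by gcongr
      _ = _ := by field_simp; norm_num
  have d3 : ‖(∫ z in (1 - 1 / T)..(1 + 1 / T), G z) - Complex.exp (Complex.I * ((-T ^ 3 - Real.pi : ℝ) : ℂ)) *
      ((Real.sqrt (2 * Real.pi / T ^ 3) : ℂ) * Complex.exp (-Complex.I * ((Real.pi / 4 : ℝ) : ℂ)))‖ ≤ 6 / T ^ 2 := by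
    rw [hG, ← mul_sub, norm_mul, mul_comm Complex.I ((-T ^ 3 - Real.pi : ℝ) : ℂ), Complex.norm_exp_ofReal_mul_I, one_mul]
    exact fr.trans d2
  have := norm_sub_le_norm_sub_add_norm_sub (∫ z in (1 - 1 / T)..(1 + 1 / T), Hf (T ^ 3) δ z)
    (∫ z in (1 - 1 / T)..(1 + 1 / T), G z) (Complex.exp (Complex.I * ((-T ^ 3 - Real.pi : ℝ) : ℂ)) *
      ((Real.sqrt (2 * Real.pi / T ^ 3) : ℂ) * Complex.exp (-Complex.I * ((Real.pi / 4 : ℝ) : ℂ))))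
  have e : 32 / T ^ 2 = 26 / T ^ 2 + 6 / T ^ 2 := by ring
  linarith

lemma total (T δ z0 z1 M : ℝ) (hT : 10 ≤ T) (h : T ^ 3 * δ = 2 * Real.pi) (hz0 : 0 < z0)
    (hd : δ < z0 ^ 2) (hz0h : z0 ≤ 1 / 2) (hM : (Real.sqrt (1 - δ / z0 ^ 2))⁻¹ ≤ M * T)
    (hz1 : 5 / 4 ≤ z1) (hz1' : z1 ≤ 4) :
    ‖(∫ z in z0..z1, Hf (T ^ 3) δ z) -
      Complex.exp (Complex.I * ((-T ^ 3 - Real.pi : ℝ) : ℂ)) *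
      ((Real.sqrt (2 * Real.pi / T ^ 3) : ℂ) * Complex.exp (-Complex.I * ((Real.pi / 4 : ℝ) : ℂ)))‖ ≤ (8 * M + 56) / T ^ 2 := by
  have hpi := Real.pi_pos
  have hpi4 := Real.pi_lt_d2
  have hT0 : 0 < T := by linarith
  have hr : 1 / T ≤ 1 / 10 := by
    apply one_div_le_one_div_of_le <;> linarith
  have hr0 : 0 < 1 / T := by positivity
  have hδ : δ = 2 * Real.pi / T ^ 3 := by field_simp; linarith
  have hδ0 : 0 < δ := by rw [hδ]; positivity
  have hδ1 : δ ≤ 1 / 10 := by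
    rw [hδ, div_le_iff₀ (by positivity)]
    have : (10:ℝ) ^ 3 ≤ T ^ 3 := by gcongr
    linarith
  have ht : 0 < T ^ 3 := by positivity
  have A1 := regionA (T ^ 3) δ z0 (1 / 2) (M * T) ht h hδ0 hz0 hd hz0h (by norm_num) hM
  have A2 := regionA (T ^ 3) δ (1 / 2) (1 - 1 / T) 2 ht h hδ0 (by norm_num) (by linarith) (by linarith) (by linarith) (by
    rw [inv_le_comm₀ _ (by norm_num)]
    · apply Real.le_sqrt_of_sq_le
      norm_num; linarith
    · apply Real.sqrt_pos.mpr; norm_num; linarith)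
  have A3 := window T δ hT h
  have A4 := regionB (T ^ 3) δ (1 + 1 / T) z1 ht h hδ0 (by linarith) (by linarith) (by linarith) hz1'
  have I1 := intervalIntegral.integral_add_adjacent_intervals
    (Hf_int (T ^ 3) δ z0 (1 / 2) hz0 hz0h) (Hf_int (T ^ 3) δ (1 / 2) (1 - 1 / T) (by norm_num) (by linarith))
  have I2 := intervalIntegral.integral_add_adjacent_intervals
    (Hf_int (T ^ 3) δ z0 (1 - 1 / T) hz0 (by linarith)) (Hf_int (T ^ 3) δ (1 - 1 / T) (1 + 1 / T) (by linarith) (by linarith))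
  have I3 := intervalIntegral.integral_add_adjacent_intervals
    (Hf_int (T ^ 3) δ z0 (1 + 1 / T) hz0 (by linarith)) (Hf_int (T ^ 3) δ (1 + 1 / T) z1 (by linarith) (by linarith))
  rw [← I3, ← I2, ← I1]
  set E := Complex.exp (Complex.I * ((-T ^ 3 - Real.pi : ℝ) : ℂ)) *
      ((Real.sqrt (2 * Real.pi / T ^ 3) : ℂ) * Complex.exp (-Complex.I * ((Real.pi / 4 : ℝ) : ℂ)))
  have : ∀ p q r s : ℂ, p + q + r + s - E = p + q + (r - E) + s := by intros; ring
  rw [this]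
  refine norm_add₄_le.trans ?_
  have B1 : 4 * ((1 - 1 / 2)⁻¹ * (M * T)) / T ^ 3 = 8 * M / T ^ 2 := by field_simp; ring
  have B2 : 4 * ((1 - (1 - 1 / T))⁻¹ * 2) / T ^ 3 = 8 / T ^ 2 := by
    rw [sub_sub_cancel]; field_simp; norm_num
  have B3 : 16 * (1 + 1 / T - 1)⁻¹ / T ^ 3 = 16 / T ^ 2 := by
    rw [add_sub_cancel_left]; field_simp
  rw [B1] at A1; rw [B2] at A2; rw [B3] at A4
  have : (8 * M + 56) / T ^ 2 = 8 * M / T ^ 2 + 8 / T ^ 2 + 32 / T ^ 2 + 16 / T ^ 2 - 0 := by ring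
  linarith

lemma x_mono (δ p q : ℝ) (hδ : 0 < δ) (hp : 0 < p) (hd : δ < p ^ 2) (hpq : p < q) :
    p + δ / p < q + δ / q := by
  have hq : 0 < q := hp.trans hpq
  have h1 : q + δ / q - (p + δ / p) = (q - p) * (p * q - δ) / (p * q) := by field_simp; ring
  have h2 : 0 < (q - p) * (p * q - δ) / (p * q) := by
    apply div_pos _ (by positivity)
    apply mul_pos (by linarith)
    nlinarith
  linarith

lemma x_lt (δ p q : ℝ) (hδ : 0 < δ) (hq : 0 < q) (hd : δ < q ^ 2)
    (h : p + δ / p < q + δ / q) : p < q := by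
  by_contra hc
  rcases (not_lt.mp hc).eq_or_lt with h1 | h1
  · rw [h1] at h; exact lt_irrefl _ h
  · exact lt_asymm h (x_mono δ q p hδ hq hd h1)

lemma x_surj (δ X : ℝ) (hδ : 0 < δ) (hX : 0 < X) (hd : 4 * δ < X ^ 2) :
    ∃ z, 0 < z ∧ δ < z ^ 2 ∧ z + δ / z = X ∧ X / 2 ≤ z ∧ z ≤ X := by
  have hs := Real.sq_sqrt (by linarith : 0 ≤ X ^ 2 - 4 * δ)
  have hs0 := Real.sqrt_nonneg (X ^ 2 - 4 * δ)
  have hs1 : Real.sqrt (X ^ 2 - 4 * δ) ≤ X := by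
    rw [Real.sqrt_le_left hX.le]; linarith
  refine ⟨(X + Real.sqrt (X ^ 2 - 4 * δ)) / 2, by linarith, by nlinarith, ?_, by linarith, by linarith⟩
  have : X + Real.sqrt (X ^ 2 - 4 * δ) ≠ 0 := by linarith
  field_simp
  nlinarith

lemma x_deriv (δ z : ℝ) (hz : 0 < z) : HasDerivAt (fun z => z + δ / z) (1 - δ / z ^ 2) z := by
  have h := (hasDerivAt_id z).add ((hasDerivAt_inv hz.ne').const_mul δ)
  refine (h.congr_deriv ?_).congr_of_eventuallyEq ?_
  · field_simp; ring
  · refine Filter.Eventually.of_forall fun x => ?_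
    simp [div_eq_mul_inv]

lemma pc_eq (t δ z : ℝ) (ht : 0 < t) (h : t * δ = 2 * Real.pi) (hδ : 0 < δ) (hz : 0 < z)
    (hd : δ < z ^ 2) : pc (t * (z + δ / z) / Real.pi) t = z ^ 2 / δ := by
  have hpi : Real.pi = t * δ / 2 := by linarith
  have ha2 : (a t) ^ 2 = 16 / δ := by
    unfold a
    rw [Real.sq_sqrt (by have := Real.pi_pos; positivity), hpi]
    field_simp; norm_num
  have ha : 0 < a t := by unfold a; have := Real.pi_pos; positivity
  have hx : 0 < z + δ / z := by positivity
  unfold pc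
  have h1 : (a t / (t * (z + δ / z) / Real.pi)) ^ 2 = 4 * δ / (z + δ / z) ^ 2 := by
    rw [div_pow, ha2, hpi]; field_simp; norm_num
  have h2 : (t * (z + δ / z) / Real.pi / a t) ^ 2 = (z + δ / z) ^ 2 / (4 * δ) := by
    rw [div_pow, ha2, hpi]; field_simp; norm_num
  have hzd : 0 < z - δ / z := by
    rw [sub_pos, div_lt_iff₀ hz]; nlinarith
  have h3 : Real.sqrt (1 - 4 * δ / (z + δ / z) ^ 2) = (z - δ / z) / (z + δ / z) := by
    rw [← Real.sqrt_sq (by positivity : 0 ≤ (z - δ / z) / (z + δ / z))]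
    congr 1
    field_simp
    ring
  rw [h1, h2, h3]
  field_simp
  ring

noncomputable def Kc (t : ℝ) : ℂ := Complex.exp (Complex.I * ((t / 2 * Real.log (t / (2 * Real.pi)) : ℝ) : ℂ))

lemma core (t δ z u : ℝ) (ht : 0 < t) (h : t * δ = 2 * Real.pi) (hδ : 0 < δ) (hz : 0 < z)
    (hd : δ < z ^ 2) (hu : u ≠ 0) :
    ((1 - δ / z ^ 2) * u ^ 2 : ℝ) • (Complex.exp (-Complex.I * ((t * ((1 : ℕ) : ℝ) * (z + δ / z) : ℝ) : ℂ) +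
      Complex.I * ((t / 2 : ℝ) : ℂ) *
        ((Real.log (pc (t * (z + δ / z) / Real.pi) t) +
            1 / pc (t * (z + δ / z) / Real.pi) t : ℝ) : ℂ)) /
    (((u ^ 2 * ((z + δ / z) ^ 2 - 8 * Real.pi / t) ^ ((1 : ℝ) / 4) : ℝ)) : ℂ)) = Kc t * Hf t δ z := by
  rw [pc_eq t δ z ht h hδ hz hd]
  have hpi : Real.pi = t * δ / 2 := by linarith
  have hv : 0 < 1 - δ / z ^ 2 := by
    rw [sub_pos, div_lt_one (by positivity)]; exact hd
  have h1 : (z + δ / z) ^ 2 - 8 * Real.pi / t = (z * (1 - δ / z ^ 2)) ^ 2 := by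
    rw [hpi]; field_simp; ring
  have h2 : ((z * (1 - δ / z ^ 2)) ^ 2) ^ ((1:ℝ) / 4) = Real.sqrt z * Real.sqrt (1 - δ / z ^ 2) := by
    rw [← Real.sqrt_mul hz.le, Real.sqrt_eq_rpow, ← Real.rpow_natCast, ← Real.rpow_mul (by positivity)]
    norm_num
  rw [h1, h2]
  have hexp : -Complex.I * ((t * ((1 : ℕ) : ℝ) * (z + δ / z) : ℝ) : ℂ) +
      Complex.I * ((t / 2 : ℝ) : ℂ) * ((Real.log (z ^ 2 / δ) + 1 / (z ^ 2 / δ) : ℝ) : ℂ) =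
      Complex.I * ((t / 2 * Real.log (t / (2 * Real.pi)) : ℝ) : ℂ) + Complex.I * (Ph t z : ℂ) := by
    have : t / 2 * Real.log (t / (2 * Real.pi)) + Ph t z = - (t * ((1 : ℕ) : ℝ) * (z + δ / z)) +
        (t / 2) * (Real.log (z ^ 2 / δ) + 1 / (z ^ 2 / δ)) := by
      have e : t / (2 * Real.pi) = δ⁻¹ := by rw [← h]; field_simp
      rw [e, Real.log_inv, Real.log_div (by positivity) hδ.ne', Real.log_pow]
      unfold Ph
      rw [hpi]
      push_cast
      field_simp
      ring
    rw [← mul_add, ← Complex.ofReal_add, this]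
    push_cast
    ring
  rw [hexp, Complex.exp_add]
  unfold Kc Hf
  rw [mul_div_assoc, Complex.real_smul]
  have hW : (((1 - δ / z ^ 2) * u ^ 2 : ℝ) : ℂ) / ((u ^ 2 * (Real.sqrt z * Real.sqrt (1 - δ / z ^ 2)) : ℝ) : ℂ) = (Wt δ z : ℂ) := by
    rw [← Complex.ofReal_div]
    congr 1
    unfold Wt
    have hsv := Real.sqrt_pos.mpr hv
    have hsz := Real.sqrt_pos.mpr hz
    have a1 := Real.sq_sqrt hv.le
    have a2 := Real.sq_sqrt hz.le
    generalize Real.sqrt z = w at *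
    generalize hvv : 1 - δ / z ^ 2 = V at *
    generalize Real.sqrt V = v at *
    rw [← a1, ← a2]
    field_simp
  rw [← hW]
  ring

lemma cov_C (t δ zm z1 ρ : ℝ) (ht : 0 < t) (h : t * δ = 2 * Real.pi) (hδ : 0 < δ) (hzm : 0 < zm)
    (hd : δ < zm ^ 2) (hxm : zm + δ / zm = 1) (hz1 : zm < z1) (hx1 : z1 + δ / z1 = 1 + ρ) (hρ : 0 < ρ)
    (h4 : 4 * δ < 1) :
    ∫ u in Set.Ioi (1 / ρ), Cfun 1 t u = ∫ z in zm..z1, Kc t * Hf t δ z := by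
  have hpos : ∀ z ∈ Set.Ioo zm z1, 0 < z ∧ δ < z ^ 2 ∧ 1 < z + δ / z ∧ z + δ / z < 1 + ρ := by
    intro z hz
    have h0 : 0 < z := hzm.trans hz.1
    have h1 : δ < z ^ 2 := by nlinarith [hz.1]
    refine ⟨h0, h1, ?_, ?_⟩
    · rw [← hxm]; exact x_mono δ zm z hδ hzm hd hz.1
    · rw [← hx1]; exact x_mono δ z z1 hδ h0 h1 hz.2
  have himg : Set.image (fun z : ℝ => ((z + δ / z) - 1)⁻¹) (Set.Ioo zm z1) = Set.Ioi (1 / ρ) := by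
    ext u
    constructor
    · rintro ⟨z, hz, rfl⟩
      obtain ⟨a1, a2, a3, a4⟩ := hpos z hz
      rw [Set.mem_Ioi, one_div]
      exact inv_strictAnti₀ (by linarith) (by linarith)
    · intro hu
      have hu : 1 / ρ < u := hu
      have hu0 : 0 < u := lt_trans (by positivity) hu
      have hu1 : 1 / u < ρ := by
        rw [div_lt_iff₀ hu0]; rw [div_lt_iff₀ hρ] at hu; linarith
      have hu2 : 0 < 1 / u := by positivity
      obtain ⟨z, b1, b2, b3, -, -⟩ := x_surj δ (1 + 1 / u) hδ (by linarith) (by nlinarith)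
      refine ⟨z, ⟨?_, ?_⟩, ?_⟩
      · apply x_lt δ zm z hδ b1 b2; rw [hxm, b3]; linarith
      · apply x_lt δ z z1 hδ (hzm.trans hz1) (by nlinarith); rw [hx1, b3]; linarith
      · simp only [b3]; simp
  have hinj : Set.InjOn (fun z : ℝ => ((z + δ / z) - 1)⁻¹) (Set.Ioo zm z1) := by
    intro p hp q hq hpq
    have e : p + δ / p = q + δ / q := by simpa using hpq
    obtain ⟨a1, a2, -, -⟩ := hpos p hp
    obtain ⟨b1, b2, -, -⟩ := hpos q hq
    rcases lt_trichotomy p q with l | l | l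
    · exact absurd e (x_mono δ p q hδ a1 a2 l).ne
    · exact l
    · exact absurd e (x_mono δ q p hδ b1 b2 l).ne'
  have hder : ∀ z ∈ Set.Ioo zm z1, HasDerivWithinAt (fun z : ℝ => ((z + δ / z) - 1)⁻¹)
      (-(1 - δ / z ^ 2) / ((z + δ / z) - 1) ^ 2) (Set.Ioo zm z1) z := by
    intro z hz
    obtain ⟨a1, a2, a3, -⟩ := hpos z hz
    exact (((x_deriv δ z a1).sub_const 1).inv (by linarith)).hasDerivWithinAt
  have key := integral_image_eq_integral_abs_deriv_smul measurableSet_Ioo hder hinj (Cfun 1 t)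
  rw [himg] at key
  rw [key, intervalIntegral.integral_of_le hz1.le, integral_Ioc_eq_integral_Ioo]
  apply setIntegral_congr_fun measurableSet_Ioo
  intro z hz
  obtain ⟨a1, a2, a3, -⟩ := hpos z hz
  have hv : 0 < 1 - δ / z ^ 2 := by
    rw [sub_pos, div_lt_one (by positivity)]; exact a2
  have hu : 0 < ((z + δ / z) - 1)⁻¹ := inv_pos.mpr (by linarith)
  have c := core t δ z (((z + δ / z) - 1)⁻¹) ht h hδ a1 a2 hu.ne'
  beta_reduce
  rw [← c]
  have e1 : |(-(1 - δ / z ^ 2) / ((z + δ / z) - 1) ^ 2)| = (1 - δ / z ^ 2) * (((z + δ / z) - 1)⁻¹) ^ 2 := by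
    rw [neg_div, abs_neg, abs_of_nonneg (by positivity), inv_pow, div_eq_mul_inv]
  have e2 : 1 + 1 / (((z + δ / z) - 1)⁻¹) = z + δ / z := by rw [one_div, inv_inv]; ring
  simp only [Cfun]
  rw [e1, e2]

lemma cov_D (t δ zm z0 ρ : ℝ) (ht : 0 < t) (h : t * δ = 2 * Real.pi) (hδ : 0 < δ) (hz0 : 0 < z0)
    (hd : δ < z0 ^ 2) (hxm : zm + δ / zm = 1) (hz1 : z0 < zm) (hx1 : z0 + δ / z0 = 1 - ρ) (hρ : 0 < ρ) :
    ∫ u in Set.Ioi (1 / ρ), Dfun 1 t u = ∫ z in z0..zm, Kc t * Hf t δ z := by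
  have hpos : ∀ z ∈ Set.Ioo z0 zm, 0 < z ∧ δ < z ^ 2 ∧ 1 - ρ < z + δ / z ∧ z + δ / z < 1 := by
    intro z hz
    have h0 : 0 < z := hz0.trans hz.1
    have h1 : δ < z ^ 2 := by nlinarith [hz.1]
    refine ⟨h0, h1, ?_, ?_⟩
    · rw [← hx1]; exact x_mono δ z0 z hδ hz0 hd hz.1
    · rw [← hxm]; exact x_mono δ z zm hδ h0 h1 hz.2
  have hρ1 : 0 < 1 - ρ := by rw [← hx1]; positivity
  have h4 : 4 * δ < (1 - ρ) ^ 2 := by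
    rw [← hx1]
    have e : (z0 + δ / z0) ^ 2 - 4 * δ = (z0 - δ / z0) ^ 2 := by field_simp; ring
    have : 0 < z0 - δ / z0 := by rw [sub_pos, div_lt_iff₀ hz0]; nlinarith
    nlinarith
  have himg : Set.image (fun z : ℝ => (1 - (z + δ / z))⁻¹) (Set.Ioo z0 zm) = Set.Ioi (1 / ρ) := by
    ext u
    constructor
    · rintro ⟨z, hz, rfl⟩
      obtain ⟨a1, a2, a3, a4⟩ := hpos z hz
      rw [Set.mem_Ioi, one_div]
      exact inv_strictAnti₀ (by linarith) (by linarith)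
    · intro hu
      have hu : 1 / ρ < u := hu
      have hu0 : 0 < u := lt_trans (by positivity) hu
      have hu1 : 1 / u < ρ := by
        rw [div_lt_iff₀ hu0]; rw [div_lt_iff₀ hρ] at hu; linarith
      have hu2 : 0 < 1 / u := by positivity
      obtain ⟨z, b1, b2, b3, -, -⟩ := x_surj δ (1 - 1 / u) hδ (by linarith) (by nlinarith)
      refine ⟨z, ⟨?_, ?_⟩, ?_⟩
      · apply x_lt δ z0 z hδ b1 b2; rw [hx1, b3]; linarith
      · apply x_lt δ z zm hδ (hz0.trans hz1) (by nlinarith); rw [hxm, b3]; linarith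
      · simp only [b3]; simp
  have hinj : Set.InjOn (fun z : ℝ => (1 - (z + δ / z))⁻¹) (Set.Ioo z0 zm) := by
    intro p hp q hq hpq
    have e : p + δ / p = q + δ / q := by simpa using hpq
    obtain ⟨a1, a2, -, -⟩ := hpos p hp
    obtain ⟨b1, b2, -, -⟩ := hpos q hq
    rcases lt_trichotomy p q with l | l | l
    · exact absurd e (x_mono δ p q hδ a1 a2 l).ne
    · exact l
    · exact absurd e (x_mono δ q p hδ b1 b2 l).ne'
  have hder : ∀ z ∈ Set.Ioo z0 zm, HasDerivWithinAt (fun z : ℝ => (1 - (z + δ / z))⁻¹)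
      (-(-(1 - δ / z ^ 2)) / (1 - (z + δ / z)) ^ 2) (Set.Ioo z0 zm) z := by
    intro z hz
    obtain ⟨a1, a2, a3, a4⟩ := hpos z hz
    exact (((x_deriv δ z a1).const_sub 1).inv (by linarith)).hasDerivWithinAt
  have key := integral_image_eq_integral_abs_deriv_smul measurableSet_Ioo hder hinj (Dfun 1 t)
  rw [himg] at key
  rw [key, intervalIntegral.integral_of_le hz1.le, integral_Ioc_eq_integral_Ioo]
  apply setIntegral_congr_fun measurableSet_Ioo
  intro z hz
  obtain ⟨a1, a2, a3, a4⟩ := hpos z hz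
  have hv : 0 < 1 - δ / z ^ 2 := by
    rw [sub_pos, div_lt_one (by positivity)]; exact a2
  have hu : 0 < (1 - (z + δ / z))⁻¹ := inv_pos.mpr (by linarith)
  have c := core t δ z ((1 - (z + δ / z))⁻¹) ht h hδ a1 a2 hu.ne'
  beta_reduce
  rw [← c]
  have e1 : |(-(-(1 - δ / z ^ 2)) / (1 - (z + δ / z)) ^ 2)| = (1 - δ / z ^ 2) * ((1 - (z + δ / z))⁻¹) ^ 2 := by
    rw [neg_neg, abs_of_nonneg (by positivity), inv_pow, div_eq_mul_inv]
  have e2 : 1 - 1 / ((1 - (z + δ / z))⁻¹) = z + δ / z := by rw [one_div, inv_inv]; ring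
  simp only [Dfun]
  rw [e1, e2]

lemma final_cmp (t T : ℝ) (hT : 10 ≤ T) (htT : t = T ^ 3) :
    ‖Kc t * (Complex.exp (Complex.I * ((-T ^ 3 - Real.pi : ℝ) : ℂ)) *
      ((Real.sqrt (2 * Real.pi / T ^ 3) : ℂ) * Complex.exp (-Complex.I * ((Real.pi / 4 : ℝ) : ℂ)))) -
      ((Real.sqrt (2 * Real.pi) * (1 - 8 * Real.pi / t) ^ (-(1 : ℝ) / 4) *
              t ^ (-(1 : ℝ) / 2) : ℝ) : ℂ) *
            Complex.exp (-Complex.I *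
              ((t - t / 2 * Real.log (t / (2 * Real.pi)) + Real.pi + 2 * Real.pi ^ 2 / t
                  : ℝ) : ℂ) - Complex.I * ((Real.pi / 4 : ℝ) : ℂ))‖ ≤ 80 / T ^ 2 := by
  have hpi := Real.pi_pos
  have hpi4 := Real.pi_lt_d2
  have hT0 : 0 < T := by linarith
  have ht : 0 < t := by rw [htT]; positivity
  have ht3 : 1000 ≤ t := by
    rw [htT]; have : (10:ℝ) ^ 3 ≤ T ^ 3 := by gcongr
    linarith
  rw [← htT]
  have hs : Real.sqrt (2 * Real.pi / t) = Real.sqrt (2 * Real.pi) * t ^ (-(1 : ℝ) / 2) := by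
    rw [Real.sqrt_div (by positivity), Real.sqrt_eq_rpow t, neg_div, Real.rpow_neg ht.le, div_eq_mul_inv]
  set c4 := (1 - 8 * Real.pi / t) ^ (-(1 : ℝ) / 4) with hc4
  have hs1 : Real.sqrt (2 * Real.pi / t) ≤ 1 := by
    rw [Real.sqrt_le_one, div_le_one ht]; linarith
  set P : ℝ := t / 2 * Real.log (t / (2 * Real.pi)) - t - Real.pi - Real.pi / 4
  have hL : Kc t * (Complex.exp (Complex.I * ((-t - Real.pi : ℝ) : ℂ)) *
      ((Real.sqrt (2 * Real.pi / t) : ℂ) * Complex.exp (-Complex.I * ((Real.pi / 4 : ℝ) : ℂ)))) =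
      (Real.sqrt (2 * Real.pi / t) : ℂ) * Complex.exp (Complex.I * (P : ℂ)) := by
    unfold Kc
    rw [mul_left_comm (Complex.exp _) ((Real.sqrt (2 * Real.pi / t) : ℝ) : ℂ), mul_left_comm (Complex.exp _) ((Real.sqrt (2 * Real.pi / t) : ℝ) : ℂ), ← Complex.exp_add, ← Complex.exp_add]
    congr 2
    simp only [P]; push_cast; ring
  have hR : Complex.exp (-Complex.I *
              ((t - t / 2 * Real.log (t / (2 * Real.pi)) + Real.pi + 2 * Real.pi ^ 2 / t
                  : ℝ) : ℂ) - Complex.I * ((Real.pi / 4 : ℝ) : ℂ)) =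
      Complex.exp (Complex.I * ((P - 2 * Real.pi ^ 2 / t : ℝ) : ℂ)) := by
    congr 1
    simp only [P]; push_cast; ring
  have hw : 8 * Real.pi / t ≤ 1 / 2 := by rw [div_le_iff₀ ht]; linarith
  have hw0 : 0 < 8 * Real.pi / t := by positivity
  have hc1 : 1 ≤ c4 := Real.one_le_rpow_of_pos_of_le_one_of_nonpos (by linarith) (by linarith) (by norm_num)
  have hc2 : c4 ≤ 1 + 2 * (8 * Real.pi / t) := by
    have : c4 ≤ (1 - 8 * Real.pi / t) ^ (-1 : ℝ) :=
      Real.rpow_le_rpow_of_exponent_ge (by linarith) (by linarith) (by norm_num)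
    rw [Real.rpow_neg_one] at this
    refine this.trans ?_
    rw [inv_le_iff_one_le_mul₀ (by linarith)]
    nlinarith
  have hsplit : (Real.sqrt (2 * Real.pi / t) : ℂ) * Complex.exp (Complex.I * (P : ℂ)) -
      ((Real.sqrt (2 * Real.pi) * c4 * t ^ (-(1 : ℝ) / 2) : ℝ) : ℂ) * Complex.exp (Complex.I * ((P - 2 * Real.pi ^ 2 / t : ℝ) : ℂ)) =
      (Real.sqrt (2 * Real.pi / t) : ℂ) * ((Complex.exp (Complex.I * (P : ℂ)) - Complex.exp (Complex.I * ((P - 2 * Real.pi ^ 2 / t : ℝ) : ℂ)))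
        + ((1 - c4 : ℝ) : ℂ) * Complex.exp (Complex.I * ((P - 2 * Real.pi ^ 2 / t : ℝ) : ℂ))) := by
    rw [hs]; push_cast; ring
  rw [hL, hR, hsplit, norm_mul, Complex.norm_real, Real.norm_of_nonneg (Real.sqrt_nonneg _)]
  have g1 := exp_diff P (P - 2 * Real.pi ^ 2 / t)
  rw [sub_sub_cancel, abs_of_pos (by positivity)] at g1
  have g2 : ‖((1 - c4 : ℝ) : ℂ) * Complex.exp (Complex.I * ((P - 2 * Real.pi ^ 2 / t : ℝ) : ℂ))‖ ≤ 2 * (8 * Real.pi / t) := by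
    rw [norm_mul, mul_comm Complex.I, Complex.norm_exp_ofReal_mul_I, mul_one, Complex.norm_real, Real.norm_eq_abs, abs_le]
    constructor <;> linarith
  have g3 : 2 * Real.pi ^ 2 / t + 2 * (8 * Real.pi / t) ≤ 80 / t := by
    have : 2 * Real.pi ^ 2 / t + 2 * (8 * Real.pi / t) = (2 * Real.pi ^ 2 + 16 * Real.pi) / t := by ring
    rw [this]
    gcongr
    nlinarith
  have g4 : 80 / t ≤ 80 / T ^ 2 := by
    rw [htT]; gcongr <;> [linarith; norm_num]
  refine le_trans (mul_le_of_le_one_left (norm_nonneg _) hs1) ?_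
  refine (norm_add_le _ _).trans ?_
  linarith

set_option maxHeartbeats 2000000

/-- Lemma B1.6: with `R = R_max(t)`,
`C(1,R) + D(1,R) = √(2π)(1 − 8π/t)^{−1/4} t^{−1/2} e^{−i(t − (t/2)log(t/2π) + π + 2π²/t) − iπ/4} + O(t^{−2/3})`. -/
theorem lemmaB16 :
    ∃ c : ℝ, c > 0 ∧ ∃ t₀ : ℝ, t₀ > 0 ∧ ∀ t : ℝ, t ≥ t₀ →
      ‖Cint 1 (Rmax t) t + Dint 1 (Rmax t) t -
          ((Real.sqrt (2 * Real.pi) * (1 - 8 * Real.pi / t) ^ (-(1 : ℝ) / 4) *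
              t ^ (-(1 : ℝ) / 2) : ℝ) : ℂ) *
            Complex.exp (-Complex.I *
              ((t - t / 2 * Real.log (t / (2 * Real.pi)) + Real.pi + 2 * Real.pi ^ 2 / t
                  : ℝ) : ℂ) - Complex.I * ((Real.pi / 4 : ℝ) : ℂ))‖
        ≤ c * t ^ (-(2 : ℝ) / 3) := by
  have hpi := Real.pi_pos
  have hpi4 := Real.pi_lt_d2
  obtain ⟨κ, hκ⟩ : ∃ κ, κ = eta * Real.sqrt (8 * Real.pi) := ⟨_, rfl⟩
  have hκ0 : 0 < κ := by rw [hκ]; unfold eta; positivity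
  refine ⟨8 * (2 / κ) + 56 + 80, by positivity, (10 + κ) ^ 3, by positivity, ?_⟩
  intro t ht
  have ht0 : 0 < t := lt_of_lt_of_le (by positivity) ht
  obtain ⟨T, hTdef⟩ : ∃ T, T = t ^ ((1:ℝ) / 3) := ⟨_, rfl⟩
  have hT0 : 0 < T := by rw [hTdef]; positivity
  have htT : t = T ^ 3 := by
    rw [hTdef, ← Real.rpow_natCast, ← Real.rpow_mul ht0.le]; norm_num
  have hTκ : 10 + κ ≤ T := by
    rw [htT] at ht
    exact le_of_pow_le_pow_left₀ (by norm_num) hT0.le ht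
  have hT : 10 ≤ T := by linarith
  have hp13 : t ^ (-(1:ℝ) / 3) = 1 / T := by
    rw [hTdef, neg_div, Real.rpow_neg ht0.le, ← one_div]
  have hp23 : t ^ (-(2:ℝ) / 3) = 1 / T ^ 2 := by
    rw [hTdef, neg_div, Real.rpow_neg ht0.le, one_div, ← Real.rpow_natCast (t ^ ((1:ℝ) / 3)), ← Real.rpow_mul ht0.le]
    norm_num
  obtain ⟨p, hp⟩ : ∃ p, p = pcm t := ⟨_, rfl⟩
  have hpT : p = 1 + κ / T := by rw [hp]; unfold pcm; rw [hp13, ← hκ]; ring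
  have hkT0 : 0 < κ / T := by positivity
  have hkT1 : κ / T ≤ 1 := by rw [div_le_one hT0]; linarith
  have hp1 : 1 < p := by linarith
  have hp2 : p ≤ 2 := by linarith
  have hp0 : 0 < p := by linarith
  obtain ⟨δ, hδ⟩ : ∃ δ, δ = 2 * Real.pi / t := ⟨_, rfl⟩
  have h : t * δ = 2 * Real.pi := by rw [hδ]; field_simp
  have hδ0 : 0 < δ := by rw [hδ]; positivity
  have hδ1 : δ ≤ 1 / 100 := by
    rw [hδ, div_le_iff₀ ht0, htT]
    have : (10:ℝ) ^ 3 ≤ T ^ 3 := by gcongr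
    linarith
  have hsδ := Real.sq_sqrt hδ0.le
  have hsδ0 := Real.sqrt_pos.mpr hδ0
  have hsδ1 : Real.sqrt δ ≤ 1 / 10 := by
    rw [Real.sqrt_le_left (by norm_num)]; linarith
  have hsp := Real.sq_sqrt hp0.le
  have hsp0 := Real.sqrt_pos.mpr hp0
  have hsp1 : 1 ≤ Real.sqrt p := by apply Real.le_sqrt_of_sq_le; linarith
  have hsp2 : Real.sqrt p ≤ 2 := by rw [Real.sqrt_le_left (by norm_num)]; linarith
  obtain ⟨z0, hz0⟩ : ∃ z0, z0 = Real.sqrt δ * Real.sqrt p := ⟨_, rfl⟩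
  have hz00 : 0 < z0 := by rw [hz0]; positivity
  have hz0sq : z0 ^ 2 = δ * p := by rw [hz0, mul_pow, hsδ, hsp]
  have hz0d : δ < z0 ^ 2 := by rw [hz0sq]; nlinarith
  have hz0h : z0 ≤ 1 / 5 := by
    rw [hz0]
    calc Real.sqrt δ * Real.sqrt p ≤ 1 / 10 * 2 := by gcongr
      _ = _ := by norm_num
  have hz0x : δ / z0 < z0 := by rw [div_lt_iff₀ hz00]; nlinarith
  obtain ⟨ρ, hρ⟩ : ∃ ρ, ρ = 1 - (z0 + δ / z0) := ⟨_, rfl⟩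
  have hρh : 1 / 2 ≤ ρ := by linarith
  have hρ1 : ρ < 1 := by have : 0 < δ / z0 := by positivity
                         linarith
  have haδ : a t = 2 * Real.sqrt δ * t / Real.pi := by
    unfold a
    rw [← Real.sqrt_sq (by positivity : 0 ≤ 2 * Real.sqrt δ * t / Real.pi)]
    congr 1
    rw [div_pow, mul_pow, mul_pow, hsδ, hδ]
    field_simp
    norm_num
  have hR : t / (Real.pi * Rmax t) = 1 / ρ := by
    have : Real.pi * Rmax t = t * ρ := by
      unfold Rmax
      rw [← hp, haδ, hρ, hz0]
      have e : δ / (Real.sqrt δ * Real.sqrt p) = Real.sqrt δ / Real.sqrt p := by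
        nth_rewrite 1 [← hsδ]; field_simp
      rw [e]
      nth_rewrite 1 [← hsp]
      field_simp
    rw [this]
    field_simp
  obtain ⟨zm, zm1, zm2, zm3, zm4, zm5⟩ := x_surj δ 1 hδ0 one_pos (by linarith)
  obtain ⟨z1, z11, z12, z13, z14, z15⟩ := x_surj δ (1 + ρ) hδ0 (by linarith) (by nlinarith)
  have hm1 : zm < z1 := x_lt δ zm z1 hδ0 z11 z12 (by rw [zm3, z13]; linarith)
  have h0m : z0 < zm := by linarith
  have hz1l : 5 / 4 ≤ z1 := by
    have : δ / z1 ≤ 1 / 4 := by rw [div_le_iff₀ z11]; linarith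
    linarith
  have hC : Cint 1 (Rmax t) t = ∫ z in zm..z1, Kc t * Hf t δ z := by
    unfold Cint
    rw [hR]
    exact cov_C t δ zm z1 ρ ht0 h hδ0 zm1 zm2 zm3 hm1 z13 (by linarith) (by linarith)
  have hD : Dint 1 (Rmax t) t = ∫ z in z0..zm, Kc t * Hf t δ z := by
    unfold Dint
    rw [hR]
    exact cov_D t δ zm z0 ρ ht0 h hδ0 hz00 hz0d zm3 h0m (by linarith) (by linarith)
  have hM : (Real.sqrt (1 - δ / z0 ^ 2))⁻¹ ≤ 2 / κ * T := by
    have e1 : 1 - δ / z0 ^ 2 = κ / T / p := by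
      rw [hz0sq, hpT]; field_simp; ring
    have e2 : κ / T / 2 ≤ 1 - δ / z0 ^ 2 := by rw [e1]; gcongr
    have e3 : 1 - δ / z0 ^ 2 ≤ 1 := by
      have : 0 < δ / z0 ^ 2 := by positivity
      linarith
    have e4 : κ / T / 2 ≤ Real.sqrt (1 - δ / z0 ^ 2) := by
      apply Real.le_sqrt_of_sq_le; nlinarith
    calc (Real.sqrt (1 - δ / z0 ^ 2))⁻¹ ≤ (κ / T / 2)⁻¹ := inv_anti₀ (by positivity) e4
      _ = _ := by field_simp
  have tot := total T δ z0 z1 (2 / κ) hT (by rw [← htT]; exact h) hz00 hz0d (by linarith) hM hz1l (by linarith)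
  have cmp := final_cmp t T hT htT
  have hK : ‖Kc t‖ = 1 := by
    unfold Kc; rw [mul_comm]; exact Complex.norm_exp_ofReal_mul_I _
  have hsum : Cint 1 (Rmax t) t + Dint 1 (Rmax t) t = Kc t * ∫ z in z0..z1, Hf (T ^ 3) δ z := by
    rw [hC, hD, ← htT, intervalIntegral.integral_const_mul, intervalIntegral.integral_const_mul,
      ← intervalIntegral.integral_add_adjacent_intervals (Hf_int t δ z0 zm hz00 h0m.le)
        (Hf_int t δ zm z1 zm1 hm1.le)]
    ring
  rw [hsum, hp23]
  have tot2 : ‖Kc t * (∫ z in z0..z1, Hf (T ^ 3) δ z) - Kc t * (Complex.exp (Complex.I * ((-T ^ 3 - Real.pi : ℝ) : ℂ)) *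
      ((Real.sqrt (2 * Real.pi / T ^ 3) : ℂ) * Complex.exp (-Complex.I * ((Real.pi / 4 : ℝ) : ℂ))))‖ ≤ (8 * (2 / κ) + 56) / T ^ 2 := by
    rw [← mul_sub, norm_mul, hK, one_mul]; exact tot
  have e : (8 * (2 / κ) + 56 + 80) * (1 / T ^ 2) = (8 * (2 / κ) + 56) / T ^ 2 + 80 / T ^ 2 := by ring
  rw [e]
  exact (norm_sub_le_norm_sub_add_norm_sub _ _ _).trans (add_le_add tot2 cmp)
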